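/- Let U ⊆ ℝ⁸ be open, let ρ_{mn} : U → ℝ be differentiable and Γ_{mnP} : U → ℝ be functions for internal indices m,n ∈ {4,…,8} and P ∈ {1,…,8}, and let G⁴⁴ = G⁵⁵ > 0 and G⁶⁶ = G⁷⁷ = G⁸⁸ > 0 be real constants with g := √((G⁴⁴)²+(G⁵⁵)²) and g_s := √((G⁷⁷)²+(G⁸⁸)²). Write Γ^m_{nP} := G^{mm}Γ_{mnP} (no sum) and define ρ_{mn;P} := ∂_Pρ_{mn} − Σ_{h=4}^{8}(ρ_{hn}Γ^h_{mP} + ρ_{mh}Γ^h_{nP}). Assume: (a) Γ_{45P} = Γ_{54P} and Γ_{66P}+Γ_{77P}+Γ_{88P} = 0; (b) there exist real constants with Γ^5_{6P} = c₆⁴Γ^5_{4P}, Γ^5_{7P} = c₇⁴Γ^5_{4P}, Γ^5_{8P} = c₈⁴Γ^5_{4P}, Γ^4_{6P} = c₆⁵Γ^4_{5P}, Γ^4_{7P} = c₇⁵Γ^4_{5P}, Γ^4_{8P} = c₈⁵Γ^4_{5P}, and c₆⁴ = c₇⁴ = c₈⁴, c₆⁵ = c₇⁵ = c₈⁵; (c)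 ρ₆₅ = ρ₇₅ = ρ₈₅, ρ₆₄ = ρ₇₄ = ρ₈₄, ρ₅₆ = ρ₅₇ = ρ₅₈, ρ₄₆ = ρ₄₇ = ρ₄₈. Define d_{1L} := (ρ₆₆+ρ₇₇)/√2, d_{2L} := (ρ₇₇+ρ₈₈)/√2, d_{3L} := (ρ₈₈+ρ₆₆)/√2, d_{1R} := (ρ₆₆−ρ₇₇)/√2, d_{2R} := (ρ₇₇−ρ₈₈)/√2, d_{3R} := (ρ₈₈−ρ₆₆)/√2, u_{1L} := (ρ₆₇+ρ₇₆)/√2, u_{2L} := (ρ₇₈+ρ₈₇)/√2, u_{3L} := (ρ₈₆+ρ₆₈)/√2, u_{1R} := (ρ₆₇−ρ₇₆)/√2, u_{2R} := (ρ₇₈−ρ₈₇)/√2, u_{3R} := (ρ₈₆−ρ₆₈)/√2, with the corresponding ';P' quantities defined by the same linear combinations of ρ_{mn;P} (e.g. d_{1L;P} := (ρ_{66;P}+ρ_{77;P})/√2); gauge potentials U¹_P := (Γ_{66P}+Γ_{77P})/√2, V¹_P := (Γ_{66P}−Γ_{77P})/√2, U²_P := (Γ_{77P}+Γ_{88P})/√2,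 V²_P := (Γ_{77P}−Γ_{88P})/√2, U³_P := (Γ_{88P}+Γ_{66P})/√2, V³_P := (Γ_{88P}−Γ_{66P})/√2, X²³_P := (Γ_{67P}+Γ_{76P})/√2, Y²³_P := (Γ_{67P}−Γ_{76P})/√2, X³¹_P := (Γ_{78P}+Γ_{87P})/√2, Y³¹_P := (Γ_{78P}−Γ_{87P})/√2, X¹²_P := (Γ_{86P}+Γ_{68P})/√2, Y¹²_P := (Γ_{86P}−Γ_{68P})/√2, W¹_P := (Γ_{45P}+Γ_{54P})/√2; and mixing fields d′_{1L} := (1/(2√2))[c₇⁵(ρ₄₆+ρ₆₄) + c₆⁵(ρ₄₇+ρ₇₄) + c₇⁴(ρ₅₆+ρ₆₅) + c₆⁴(ρ₅₇+ρ₇₅)], d′_{2L} := (1/(2√2))[c₈⁵(ρ₄₇+ρ₇₄) + c₇⁵(ρ₄₈+ρ₈₄) + c₈⁴(ρ₅₇+ρ₇₅) + c₇⁴(ρ₅₈+ρ₈₅)], d′_{3L} := (1/(2√2))[c₆⁵(ρ₄₈+ρ₈₄) + c₈⁵(ρ₄₆+ρ₆₄) + c₆⁴(ρ₅₈+ρ₈₅)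 + c₈⁴(ρ₅₆+ρ₆₅)], u′_{1L} := (1/(2√2))[c₆⁵(ρ₄₆+ρ₆₄) + c₆⁴(ρ₅₆+ρ₆₅) + c₇⁵(ρ₄₇+ρ₇₄) + c₇⁴(ρ₅₇+ρ₇₅)], u′_{2L} := (1/(2√2))[c₇⁵(ρ₄₇+ρ₇₄) + c₇⁴(ρ₅₇+ρ₇₅) + c₈⁵(ρ₄₈+ρ₈₄) + c₈⁴(ρ₅₈+ρ₈₅)], u′_{3L} := (1/(2√2))[c₈⁵(ρ₄₈+ρ₈₄) + c₈⁴(ρ₅₈+ρ₈₅) + c₆⁵(ρ₄₆+ρ₆₄) + c₆⁴(ρ₅₆+ρ₆₅)]. Then on U, for all P, the twelve identities hold: d_{1L;P} = ∂_Pd_{1L} − g_s d_{1L}U¹_P + g_s d_{2L}V¹_P − g_s d_{3L}V¹_P − g_s u_{1L}X²³_P − (g_s/2)u_{2L}X³¹_P + (g_s/2)u_{2L}Y³¹_P − (g_s/2)u_{3L}X¹²_P − (g_s/2)u_{3L}Y¹²_P − g u′_{1L}W¹_P; d_{2L;P} = ∂_Pd_{2L} − g_s d_{2L}U²_P + g_s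 d_{3L}V²_P − g_s d_{1L}V²_P − g_s u_{2L}X³¹_P − (g_s/2)u_{3L}X¹²_P + (g_s/2)u_{3L}Y¹²_P − (g_s/2)u_{1L}X²³_P − (g_s/2)u_{1L}Y²³_P − g u′_{2L}W¹_P; d_{3L;P} = ∂_Pd_{3L} − g_s d_{3L}U³_P + g_s d_{1L}V³_P − g_s d_{2L}V³_P − g_s u_{3L}X¹²_P − (g_s/2)u_{1L}X²³_P + (g_s/2)u_{1L}Y²³_P − (g_s/2)u_{2L}X³¹_P − (g_s/2)u_{2L}Y³¹_P − g u′_{3L}W¹_P; d_{1R;P} = ∂_Pd_{1R} − g_s d_{1L}V¹_P + g_s d_{2L}U¹_P − g_s d_{3L}U¹_P + g_s u_{1L}Y²³_P + (g_s/2)u_{2L}X³¹_P − (g_s/2)u_{2L}Y³¹_P − (g_s/2)u_{3L}X¹²_P − (g_s/2)u_{3L}Y¹²_P; d_{2R;P} = ∂_Pd_{2R} − g_s d_{2L}V²_P + g_s d_{3L}U²_P − g_s d_{1L}U²_P + g_s u_{2L}Y³¹_P + (g_s/2)u_{3L}X¹²_P − (g_s/2)u_{3L}Y¹²_P − (g_s/2)u_{1L}X²³_P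 − (g_s/2)u_{1L}Y²³_P; d_{3R;P} = ∂_Pd_{3R} − g_s d_{3L}V³_P + g_s d_{1L}U³_P − g_s d_{2L}U³_P + g_s u_{3L}Y¹²_P + (g_s/2)u_{1L}X²³_P − (g_s/2)u_{1L}Y²³_P − (g_s/2)u_{2L}X³¹_P − (g_s/2)u_{2L}Y³¹_P; u_{1L;P} = ∂_Pu_{1L} − g_s u_{1L}U¹_P − (g_s/2)u_{2L}X¹²_P − (g_s/2)u_{2L}Y¹²_P − (g_s/2)u_{3L}X³¹_P + (g_s/2)u_{3L}Y³¹_P − g_s d_{1L}X²³_P + g_s d_{2L}Y²³_P − g_s d_{3L}Y²³_P − g d′_{1L}W¹_P; u_{2L;P} = ∂_Pu_{2L} − g_s u_{2L}U²_P − (g_s/2)u_{3L}X²³_P − (g_s/2)u_{3L}Y²³_P − (g_s/2)u_{1L}X¹²_P + (g_s/2)u_{1L}Y¹²_P − g_s d_{2L}X³¹_P + g_s d_{3L}Y³¹_P − g_s d_{1L}Y³¹_P − g d′_{2L}W¹_P; u_{3L;P} = ∂_Pu_{3L} − g_s u_{3L}U³_P − (g_s/2)u_{1L}X³¹_P − (g_s/2)u_{1L}Y³¹_P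 − (g_s/2)u_{2L}X²³_P + (g_s/2)u_{2L}Y²³_P − g_s d_{3L}X¹²_P + g_s d_{1L}Y¹²_P − g_s d_{2L}Y¹²_P − g d′_{3L}W¹_P; u_{1R;P} = ∂_Pu_{1R} − g_s u_{1R}U¹_P + (g_s/2)u_{2R}X¹²_P + (g_s/2)u_{2R}Y¹²_P + (g_s/2)u_{3R}X³¹_P − (g_s/2)u_{3R}Y³¹_P; u_{2R;P} = ∂_Pu_{2R} − g_s u_{2R}U²_P + (g_s/2)u_{3R}X²³_P + (g_s/2)u_{3R}Y²³_P + (g_s/2)u_{1R}X¹²_P − (g_s/2)u_{1R}Y¹²_P; u_{3R;P} = ∂_Pu_{3R} − g_s u_{3R}U³_P + (g_s/2)u_{1R}X³¹_P + (g_s/2)u_{1R}Y³¹_P + (g_s/2)u_{2R}X²³_P − (g_s/2)u_{2R}Y²³_P. -/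

import Mathlib

noncomputable section

/-- Partial derivative in the `P`-th coordinate direction of `ℝ⁸`. -/
def pd (P : Fin 8) (f : (Fin 8 → ℝ) → ℝ) (x : Fin 8 → ℝ) : ℝ :=
  fderiv ℝ f x (Pi.single P 1)

/-- Internal covariant derivative
`ρ_{mn;P} := ∂_P ρ_{mn} − Σ_h (ρ_{hn} Γ^h_{mP} + ρ_{mh} Γ^h_{nP})`, with
`Γ^h_{mP} := G^{hh} Γ_{hmP}` (no sum); internal index `i : Fin 5` corresponds
to the coordinate direction `4 + i` (so `0 ↦ 4, …, 4 ↦ 8`). -/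
def covD (Ginv : Fin 5 → ℝ) (Γ : Fin 5 → Fin 5 → Fin 8 → (Fin 8 → ℝ) → ℝ)
    (ρ : Fin 5 → Fin 5 → (Fin 8 → ℝ) → ℝ) (m n : Fin 5) (P : Fin 8)
    (x : Fin 8 → ℝ) : ℝ :=
  pd P (ρ m n) x
    - ∑ h : Fin 5, (ρ h n x * (Ginv h * Γ h m P x) + ρ m h x * (Ginv h * Γ h n P x))

open scoped Matrix

/-!
In the color block `R` of `ρ` and `C` of `Γ`, the covariant derivative reads
`∂R - (g_s / √2) (Cᵀ R + R C) - (g / 2) W¹ M`, where `M` collects the lepton components of `ρ`.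
Every color charge is a linear functional of such a block, so it commutes with `∂_P` and can be
applied term by term. Polarizing `Cᵀ R + R C` into left and right combinations gives the strong
part, uniformly under the cyclic symmetry of the three colors. The conditions of CKM mixing make
all entries of `M` equal: the left combinations of `M / 2` are the mixing fields and the right ones
vanish.
-/

/-- The lepton directions 4, 5 among the internal directions 4, …, 8. -/
def leptonIndex : Fin 2 → Fin 5 := Fin.castAdd 3

/-- The color directions 6, 7, 8 among the internal directions 4, …, 8, indexed cyclically so that
`i ↦ i + 1` permutes the three color charges of each kind. -/
def quarkIndex : Fin 3 → Fin 5 := Fin.natAdd 2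

/-- The color block, at a point, of a field with two internal indices. -/
def quarkBlock {α : Type*} (F : Fin 5 → Fin 5 → α → ℝ) (x : α) : Matrix (Fin 3) (Fin 3) ℝ :=
  Matrix.of fun i j => F (quarkIndex i) (quarkIndex j) x

/-- The combination defining `d_{iL}` from the charge `ρ`, and `U^i` from the connection `Γ`. -/
@[simps]
def downLeft (i : Fin 3) : Matrix (Fin 3) (Fin 3) ℝ →ₗ[ℝ] ℝ where
  toFun M := (M i i + M (i + 1) (i + 1)) / √2
  map_add' M N := by simp only [Matrix.add_apply]; ring
  map_smul' a M := by simp only [Matrix.smul_apply, smul_eq_mul, RingHom.id_apply]; ring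

/-- The combination defining `d_{iR}` from the charge `ρ`, and `V^i` from the connection `Γ`. -/
@[simps]
def downRight (i : Fin 3) : Matrix (Fin 3) (Fin 3) ℝ →ₗ[ℝ] ℝ where
  toFun M := (M i i - M (i + 1) (i + 1)) / √2
  map_add' M N := by simp only [Matrix.add_apply]; ring
  map_smul' a M := by simp only [Matrix.smul_apply, smul_eq_mul, RingHom.id_apply]; ring

/-- The combination defining `u_{iL}` from the charge `ρ`, and `X²³, X³¹, X¹²` (for `i = 0, 1, 2`)
from the connection `Γ`. -/
@[simps]
def upLeft (i : Fin 3) : Matrix (Fin 3) (Fin 3) ℝ →ₗ[ℝ] ℝ where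
  toFun M := (M i (i + 1) + M (i + 1) i) / √2
  map_add' M N := by simp only [Matrix.add_apply]; ring
  map_smul' a M := by simp only [Matrix.smul_apply, smul_eq_mul, RingHom.id_apply]; ring

/-- The combination defining `u_{iR}` from the charge `ρ`, and `Y²³, Y³¹, Y¹²` (for `i = 0, 1, 2`)
from the connection `Γ`. -/
@[simps]
def upRight (i : Fin 3) : Matrix (Fin 3) (Fin 3) ℝ →ₗ[ℝ] ℝ where
  toFun M := (M i (i + 1) - M (i + 1) i) / √2
  map_add' M N := by simp only [Matrix.add_apply]; ring
  map_smul' a M := by simp only [Matrix.smul_apply, smul_eq_mul, RingHom.id_apply]; ring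

/-- The weak gauge potential `W¹_P`. -/
def weakPotential {α : Type*} (Γ : Fin 5 → Fin 5 → Fin 8 → α → ℝ) (P : Fin 8) (x : α) : ℝ :=
  (Γ 0 1 P x + Γ 1 0 P x) / √2

/-- The matrix `Σ_h (c_{hi} ρ_{hj} + ρ_{ih} c_{hj})`, with `h` running over the lepton directions,
through which the lepton components of `ρ` enter the covariant derivative of its color block.
The rows `c 0` and `c 1` hold the mixing constants with upper index 5 and 4 respectively. -/
def leptonMixing {α : Type*} (c : Matrix (Fin 2) (Fin 3) ℝ) (ρ : Fin 5 → Fin 5 → α → ℝ) (x : α) :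
    Matrix (Fin 3) (Fin 3) ℝ :=
  cᵀ * (Matrix.of fun h j => ρ (leptonIndex h) (quarkIndex j) x)
    + (Matrix.of fun i h => ρ (quarkIndex i) (leptonIndex h) x) * c

/-- The mixing field `u′_{iL}`, with the mixing constants arranged as in `leptonMixing`. -/
def upMixing {α : Type*} (c : Matrix (Fin 2) (Fin 3) ℝ) (ρ : Fin 5 → Fin 5 → α → ℝ) (i : Fin 3)
    (x : α) : ℝ :=
  1 / (2 * √2) *
    (c 0 i * (ρ 0 (quarkIndex i) x + ρ (quarkIndex i) 0 x)
      + c 1 i * (ρ 1 (quarkIndex i) x + ρ (quarkIndex i) 1 x)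
      + c 0 (i + 1) * (ρ 0 (quarkIndex (i + 1)) x + ρ (quarkIndex (i + 1)) 0 x)
      + c 1 (i + 1) * (ρ 1 (quarkIndex (i + 1)) x + ρ (quarkIndex (i + 1)) 1 x))

/-- The mixing field `d′_{iL}`, with the mixing constants arranged as in `leptonMixing`. -/
def downMixing {α : Type*} (c : Matrix (Fin 2) (Fin 3) ℝ) (ρ : Fin 5 → Fin 5 → α → ℝ) (i : Fin 3)
    (x : α) : ℝ :=
  1 / (2 * √2) *
    (c 0 (i + 1) * (ρ 0 (quarkIndex i) x + ρ (quarkIndex i) 0 x)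
      + c 0 i * (ρ 0 (quarkIndex (i + 1)) x + ρ (quarkIndex (i + 1)) 0 x)
      + c 1 (i + 1) * (ρ 1 (quarkIndex i) x + ρ (quarkIndex i) 1 x)
      + c 1 i * (ρ 1 (quarkIndex (i + 1)) x + ρ (quarkIndex (i + 1)) 1 x))

section ColorAlgebra

theorem sum_fin_three_cyclic {M : Type*} [AddCommMonoid M] (f : Fin 3 → M) (i : Fin 3) :
    ∑ j, f j = f i + f (i + 1) + f (i + 2) := by
  rw [← Equiv.sum_comp (Equiv.addLeft i) f, Fin.sum_univ_three]
  simp only [Equiv.coe_addLeft, add_zero]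

variable (C R : Matrix (Fin 3) (Fin 3) ℝ) (i : Fin 3)

theorem transpose_mul_add_mul_apply_cyclic (k l : Fin 3) :
    (Cᵀ * R + R * C) k l
      = C i k * R i l + C (i + 1) k * R (i + 1) l + C (i + 2) k * R (i + 2) l
        + (R k i * C i l + R k (i + 1) * C (i + 1) l + R k (i + 2) * C (i + 2) l) := by
  simp only [Matrix.add_apply, Matrix.mul_apply, Matrix.transpose_apply, sum_fin_three_cyclic _ i]

theorem add_one_add_one_fin_three : i + 1 + 1 = i + 2 := by rw [add_assoc]; rfl

theorem add_two_add_one_fin_three : i + 2 + 1 = i := by rw [add_assoc]; exact add_zero i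

theorem downLeft_transpose_mul_add_mul :
    downLeft i (Cᵀ * R + R * C) = √2 *
      (downLeft i R * downLeft i C - downLeft (i + 1) R * downRight i C
        + downLeft (i + 2) R * downRight i C + upLeft i R * upLeft i C
        + upLeft (i + 1) R * (upLeft (i + 1) C - upRight (i + 1) C) / 2
        + upLeft (i + 2) R * (upLeft (i + 2) C + upRight (i + 2) C) / 2) := by
  simp only [downLeft_apply, downRight_apply, upLeft_apply, upRight_apply,
    add_one_add_one_fin_three, add_two_add_one_fin_three, transpose_mul_add_mul_apply_cyclic C R i]
  field_simp
  ring

theorem downRight_transpose_mul_add_mul :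
    downRight i (Cᵀ * R + R * C) = √2 *
      (downLeft i R * downRight i C - downLeft (i + 1) R * downLeft i C
        + downLeft (i + 2) R * downLeft i C - upLeft i R * upRight i C
        - upLeft (i + 1) R * (upLeft (i + 1) C - upRight (i + 1) C) / 2
        + upLeft (i + 2) R * (upLeft (i + 2) C + upRight (i + 2) C) / 2) := by
  simp only [downLeft_apply, downRight_apply, upLeft_apply, upRight_apply,
    add_one_add_one_fin_three, add_two_add_one_fin_three, transpose_mul_add_mul_apply_cyclic C R i]
  field_simp
  ring

theorem upLeft_transpose_mul_add_mul :
    upLeft i (Cᵀ * R + R * C) = √2 *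
      (upLeft i R * downLeft i C
        + upLeft (i + 1) R * (upLeft (i + 2) C + upRight (i + 2) C) / 2
        + upLeft (i + 2) R * (upLeft (i + 1) C - upRight (i + 1) C) / 2
        + downLeft i R * upLeft i C - downLeft (i + 1) R * upRight i C
        + downLeft (i + 2) R * upRight i C) := by
  simp only [downLeft_apply, upLeft_apply, upRight_apply,
    add_one_add_one_fin_three, add_two_add_one_fin_three, transpose_mul_add_mul_apply_cyclic C R i]
  field_simp
  ring

theorem upRight_transpose_mul_add_mul :
    upRight i (Cᵀ * R + R * C) = √2 *
      (upRight i R * downLeft i C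
        - upRight (i + 1) R * (upLeft (i + 2) C + upRight (i + 2) C) / 2
        - upRight (i + 2) R * (upLeft (i + 1) C - upRight (i + 1) C) / 2) := by
  simp only [downLeft_apply, upLeft_apply, upRight_apply,
    add_one_add_one_fin_three, add_two_add_one_fin_three, transpose_mul_add_mul_apply_cyclic C R i]
  field_simp
  ring

end ColorAlgebra

open scoped Matrix.Norms.Elementwise in
theorem pd_linearMap_comp {m n : Type*} [Finite m] [Finite n] (ℓ : Matrix m n ℝ →ₗ[ℝ] ℝ)
    {F : m → n → (Fin 8 → ℝ) → ℝ} {x : Fin 8 → ℝ} (hF : ∀ i j, DifferentiableAt ℝ (F i j) x)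
    (P : Fin 8) :
    pd P (fun y => ℓ (Matrix.of fun i j => F i j y)) x
      = ℓ (Matrix.of fun i j => pd P (F i j) x) := by
  cases nonempty_fintype m
  cases nonempty_fintype n
  have hblock : HasFDerivAt (fun y => (Matrix.of fun i j => F i j y : Matrix m n ℝ))
      (ContinuousLinearMap.pi fun i => ContinuousLinearMap.pi fun j => fderiv ℝ (F i j) x) x :=
    hasFDerivAt_pi.2 fun i => hasFDerivAt_pi.2 fun j => (hF i j).hasFDerivAt
  have hcomp : HasFDerivAt (fun y => ℓ (Matrix.of fun i j => F i j y)) _ x :=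
    ℓ.toContinuousLinearMap.hasFDerivAt.comp x hblock
  rw [pd, hcomp.fderiv]
  rfl

section CovariantDerivative

variable {ρ : Fin 5 → Fin 5 → (Fin 8 → ℝ) → ℝ} {Γ : Fin 5 → Fin 5 → Fin 8 → (Fin 8 → ℝ) → ℝ}
  {Ginv : Fin 5 → ℝ} {g gs : ℝ} {c : Matrix (Fin 2) (Fin 3) ℝ} {P : Fin 8} {x : Fin 8 → ℝ}

theorem lepton_connection_eq_weakPotential (hg : ∀ h, g = √2 * Ginv (leptonIndex h))
    (hΓsymm : Γ 0 1 P x = Γ 1 0 P x)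
    (hΓ : ∀ h i, Ginv (leptonIndex h) * Γ (leptonIndex h) (quarkIndex i) P x
      = c h i * (Ginv (leptonIndex h) * Γ (leptonIndex h) (leptonIndex (h + 1)) P x))
    (h : Fin 2) (i : Fin 3) :
    Ginv (leptonIndex h) * Γ (leptonIndex h) (quarkIndex i) P x
      = g / 2 * weakPotential Γ P x * c h i := by
  have hW : weakPotential Γ P x = √2 * Γ (leptonIndex h) (leptonIndex (h + 1)) P x := by
    have hΓ01 : Γ (leptonIndex h) (leptonIndex (h + 1)) P x = Γ 0 1 P x := by
      fin_cases h
      · rfl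
      · exact hΓsymm.symm
    rw [weakPotential, ← hΓsymm, hΓ01, ← two_mul, mul_div_right_comm, Real.div_sqrt]
  rw [hΓ, hW, hg h]
  linear_combination (-c h i * Ginv (leptonIndex h) *
    Γ (leptonIndex h) (leptonIndex (h + 1)) P x / 2) * Real.sq_sqrt zero_le_two

theorem quarkBlock_covD (hgs : ∀ i, gs = √2 * Ginv (quarkIndex i))
    (hΓ : ∀ h i, Ginv (leptonIndex h) * Γ (leptonIndex h) (quarkIndex i) P x
      = g / 2 * weakPotential Γ P x * c h i) :
    quarkBlock (fun m n => covD Ginv Γ ρ m n P) x = quarkBlock (fun m n => pd P (ρ m n)) x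
      - (gs / √2) • ((quarkBlock (fun m n => Γ m n P) x)ᵀ * quarkBlock ρ x
          + quarkBlock ρ x * quarkBlock (fun m n => Γ m n P) x)
      - (g / 2 * weakPotential Γ P x) • leptonMixing c ρ x := by
  have hG : ∀ i, Ginv (quarkIndex i) = gs / √2 := fun i => by rw [hgs i]; field_simp
  ext i j
  have hsplit : ∀ f : Fin 5 → ℝ, ∑ h, f h = ∑ h, f (leptonIndex h) + ∑ h, f (quarkIndex h) :=
    Fin.sum_univ_add (a := 2) (b := 3)
  simp only [quarkBlock, covD, hsplit, hG, hΓ, leptonMixing, Matrix.sub_apply, Matrix.smul_apply,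
    Matrix.add_apply, Matrix.mul_apply, Matrix.transpose_apply, Matrix.of_apply, smul_eq_mul,
    Fin.sum_univ_two, Fin.sum_univ_three]
  ring

theorem linearMap_quarkBlock_covD (ℓ : Matrix (Fin 3) (Fin 3) ℝ →ₗ[ℝ] ℝ)
    (hρ : ∀ i j, DifferentiableAt ℝ (ρ (quarkIndex i) (quarkIndex j)) x)
    (hgs : ∀ i, gs = √2 * Ginv (quarkIndex i))
    (hΓ : ∀ h i, Ginv (leptonIndex h) * Γ (leptonIndex h) (quarkIndex i) P x
      = g / 2 * weakPotential Γ P x * c h i) :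
    ℓ (quarkBlock (fun m n => covD Ginv Γ ρ m n P) x) = pd P (fun y => ℓ (quarkBlock ρ y)) x
      - gs / √2 * ℓ ((quarkBlock (fun m n => Γ m n P) x)ᵀ * quarkBlock ρ x
          + quarkBlock ρ x * quarkBlock (fun m n => Γ m n P) x)
      - g * (ℓ (leptonMixing c ρ x) / 2) * weakPotential Γ P x := by
  have hpd : pd P (fun y => ℓ (quarkBlock ρ y)) x = ℓ (quarkBlock (fun m n => pd P (ρ m n)) x) :=
    pd_linearMap_comp ℓ hρ P
  rw [quarkBlock_covD hgs hΓ, map_sub, map_sub, map_smul, map_smul, hpd, smul_eq_mul, smul_eq_mul]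
  ring

theorem leptonMixing_apply_eq (hc : ∀ h i, c h i = c h 0)
    (hρ_left : ∀ h i, ρ (leptonIndex h) (quarkIndex i) x = ρ (leptonIndex h) (quarkIndex 0) x)
    (hρ_right : ∀ h i, ρ (quarkIndex i) (leptonIndex h) x = ρ (quarkIndex 0) (leptonIndex h) x)
    (i j : Fin 3) : leptonMixing c ρ x i j = leptonMixing c ρ x 0 0 := by
  simp only [leptonMixing, Matrix.add_apply, Matrix.mul_apply, Matrix.transpose_apply,
    Matrix.of_apply, hc _ i, hc _ j, hρ_left _ j, hρ_right _ i]

theorem leptonMixing_apply (i j : Fin 3) :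
    leptonMixing c ρ x i j
      = c 0 i * ρ 0 (quarkIndex j) x + c 1 i * ρ 1 (quarkIndex j) x
        + (ρ (quarkIndex i) 0 x * c 0 j + ρ (quarkIndex i) 1 x * c 1 j) := by
  simp only [leptonMixing, Matrix.add_apply, Matrix.mul_apply, Fin.sum_univ_two,
    Matrix.transpose_apply, Matrix.of_apply]
  rfl

theorem downLeft_leptonMixing (i : Fin 3) :
    downLeft i (leptonMixing c ρ x) = 2 * upMixing c ρ i x := by
  rw [downLeft_apply, leptonMixing_apply, leptonMixing_apply, upMixing]
  field_simp
  ring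

theorem upLeft_leptonMixing (i : Fin 3) :
    upLeft i (leptonMixing c ρ x) = 2 * downMixing c ρ i x := by
  rw [upLeft_apply, leptonMixing_apply, leptonMixing_apply, downMixing]
  field_simp
  ring

theorem stmt_6_general (hρ : ∀ i j, DifferentiableAt ℝ (ρ (quarkIndex i) (quarkIndex j)) x)
    (hg : ∀ h, g = √2 * Ginv (leptonIndex h)) (hgs : ∀ i, gs = √2 * Ginv (quarkIndex i))
    (hΓsymm : Γ 0 1 P x = Γ 1 0 P x)
    (hΓ : ∀ h i, Ginv (leptonIndex h) * Γ (leptonIndex h) (quarkIndex i) P x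
      = c h i * (Ginv (leptonIndex h) * Γ (leptonIndex h) (leptonIndex (h + 1)) P x))
    (hc : ∀ h i, c h i = c h 0)
    (hρ_left : ∀ h i, ρ (leptonIndex h) (quarkIndex i) x = ρ (leptonIndex h) (quarkIndex 0) x)
    (hρ_right : ∀ h i, ρ (quarkIndex i) (leptonIndex h) x = ρ (quarkIndex 0) (leptonIndex h) x)
    (i : Fin 3) :
    let D := quarkBlock (fun m n => covD Ginv Γ ρ m n P) x
    let dL := fun j y => downLeft j (quarkBlock ρ y)
    let dR := fun j y => downRight j (quarkBlock ρ y)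
    let uL := fun j y => upLeft j (quarkBlock ρ y)
    let uR := fun j y => upRight j (quarkBlock ρ y)
    let U := fun j => downLeft j (quarkBlock (fun m n => Γ m n P) x)
    let V := fun j => downRight j (quarkBlock (fun m n => Γ m n P) x)
    let X := fun j => upLeft j (quarkBlock (fun m n => Γ m n P) x)
    let Y := fun j => upRight j (quarkBlock (fun m n => Γ m n P) x)
    let W := weakPotential Γ P x
    downLeft i D = pd P (dL i) x - gs * dL i x * U i + gs * dL (i + 1) x * V i
        - gs * dL (i + 2) x * V i - gs * uL i x * X i
        - gs / 2 * uL (i + 1) x * X (i + 1) + gs / 2 * uL (i + 1) x * Y (i + 1)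
        - gs / 2 * uL (i + 2) x * X (i + 2) - gs / 2 * uL (i + 2) x * Y (i + 2)
        - g * upMixing c ρ i x * W ∧
      downRight i D = pd P (dR i) x - gs * dL i x * V i + gs * dL (i + 1) x * U i
        - gs * dL (i + 2) x * U i + gs * uL i x * Y i
        + gs / 2 * uL (i + 1) x * X (i + 1) - gs / 2 * uL (i + 1) x * Y (i + 1)
        - gs / 2 * uL (i + 2) x * X (i + 2) - gs / 2 * uL (i + 2) x * Y (i + 2) ∧
      upLeft i D = pd P (uL i) x - gs * uL i x * U i
        - gs / 2 * uL (i + 1) x * X (i + 2) - gs / 2 * uL (i + 1) x * Y (i + 2)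
        - gs / 2 * uL (i + 2) x * X (i + 1) + gs / 2 * uL (i + 2) x * Y (i + 1)
        - gs * dL i x * X i + gs * dL (i + 1) x * Y i - gs * dL (i + 2) x * Y i
        - g * downMixing c ρ i x * W ∧
      upRight i D = pd P (uR i) x - gs * uR i x * U i
        + gs / 2 * uR (i + 1) x * X (i + 2) + gs / 2 * uR (i + 1) x * Y (i + 2)
        + gs / 2 * uR (i + 2) x * X (i + 1) - gs / 2 * uR (i + 2) x * Y (i + 1) := by
  intro D dL dR uL uR U V X Y W
  have hmix := leptonMixing_apply_eq hc hρ_left hρ_right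
  have hdown : downRight i (leptonMixing c ρ x) = 0 := by
    rw [downRight_apply, hmix i i, hmix (i + 1) (i + 1), sub_self, zero_div]
  have hup : upRight i (leptonMixing c ρ x) = 0 := by
    rw [upRight_apply, hmix i (i + 1), hmix (i + 1) i, sub_self, zero_div]
  have hcov := fun ℓ =>
    linearMap_quarkBlock_covD ℓ hρ hgs (lepton_connection_eq_weakPotential hg hΓsymm hΓ)
  refine ⟨?_, ?_, ?_, ?_⟩
  · rw [hcov, downLeft_transpose_mul_add_mul, downLeft_leptonMixing]
    field_simp
    ring
  · rw [hcov, downRight_transpose_mul_add_mul, hdown]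
    field_simp
    ring
  · rw [hcov, upLeft_transpose_mul_add_mul, upLeft_leptonMixing]
    field_simp
    ring
  · rw [hcov, upRight_transpose_mul_add_mul, hup]
    field_simp
    ring

end CovariantDerivative

theorem forall_fin_three {p : Fin 3 → Prop} : (∀ i, p i) ↔ p 0 ∧ p 1 ∧ p 2 :=
  Fin.forall_fin_succ.trans (and_congr_right' Fin.forall_fin_two)

theorem forall_eq_apply_zero {α : Type*} {f : Fin 3 → α} (h01 : f 0 = f 1)
    (h12 : f 1 = f 2) : ∀ i, f i = f 0 :=
  forall_fin_three.2 ⟨rfl, h01.symm, (h01.trans h12).symm⟩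

theorem sqrt_sq_add_sq_self {a : ℝ} (ha : 0 ≤ a) : √(a ^ 2 + a ^ 2) = √2 * a := by
  rw [← two_mul, Real.sqrt_mul zero_le_two, Real.sqrt_sq ha]

/-- **CKM mixing in the affine connection representation** (𝔇 = 8,
internal indices `0,…,4 ↦ 4,…,8`): under the basic symmetry conditions (a)
and the first (b) and second (c) conditions of CKM mixing, the down-type and
up-type color charges satisfy the stated twelve evolution equations with the
mixed fields `d′`, `u′`. -/
theorem stmt_6
    (U : Set (Fin 8 → ℝ)) (hU : IsOpen U)
    (ρ : Fin 5 → Fin 5 → (Fin 8 → ℝ) → ℝ)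
    (hρ : ∀ m n, ∀ x ∈ U, DifferentiableAt ℝ (ρ m n) x)
    (Γ : Fin 5 → Fin 5 → Fin 8 → (Fin 8 → ℝ) → ℝ)
    (G4 G5 G6 G7 G8 : ℝ) (hG45 : G4 = G5) (hG67 : G6 = G7) (hG78 : G7 = G8)
    (hG4pos : 0 < G4) (hG6pos : 0 < G6)
    (g : ℝ) (hg : g = Real.sqrt (G4 ^ 2 + G5 ^ 2))
    (gs : ℝ) (hgs : gs = Real.sqrt (G7 ^ 2 + G8 ^ 2))
    (Ginv : Fin 5 → ℝ) (hGinv : Ginv = ![G4, G5, G6, G7, G8])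
    -- (a) basic symmetry conditions
    (ha1 : ∀ P : Fin 8, ∀ x ∈ U, Γ 0 1 P x = Γ 1 0 P x)
    (ha2 : ∀ P : Fin 8, ∀ x ∈ U, Γ 2 2 P x + Γ 3 3 P x + Γ 4 4 P x = 0)
    -- (b) first conditions of CKM mixing (Γ^m_{nP} := G^{mm} Γ_{mnP})
    (cd64 cd74 cd84 cd65 cd75 cd85 : ℝ)
    (hb1 : ∀ P : Fin 8, ∀ x ∈ U, Ginv 1 * Γ 1 2 P x = cd64 * (Ginv 1 * Γ 1 0 P x))
    (hb2 : ∀ P : Fin 8, ∀ x ∈ U, Ginv 1 * Γ 1 3 P x = cd74 * (Ginv 1 * Γ 1 0 P x))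
    (hb3 : ∀ P : Fin 8, ∀ x ∈ U, Ginv 1 * Γ 1 4 P x = cd84 * (Ginv 1 * Γ 1 0 P x))
    (hb4 : ∀ P : Fin 8, ∀ x ∈ U, Ginv 0 * Γ 0 2 P x = cd65 * (Ginv 0 * Γ 0 1 P x))
    (hb5 : ∀ P : Fin 8, ∀ x ∈ U, Ginv 0 * Γ 0 3 P x = cd75 * (Ginv 0 * Γ 0 1 P x))
    (hb6 : ∀ P : Fin 8, ∀ x ∈ U, Ginv 0 * Γ 0 4 P x = cd85 * (Ginv 0 * Γ 0 1 P x))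
    (hc1 : cd64 = cd74) (hc2 : cd74 = cd84)
    (hc3 : cd65 = cd75) (hc4 : cd75 = cd85)
    -- (c) second conditions of CKM mixing
    (hr1 : ∀ x, ρ 2 1 x = ρ 3 1 x) (hr2 : ∀ x, ρ 3 1 x = ρ 4 1 x)
    (hr3 : ∀ x, ρ 2 0 x = ρ 3 0 x) (hr4 : ∀ x, ρ 3 0 x = ρ 4 0 x)
    (hr5 : ∀ x, ρ 1 2 x = ρ 1 3 x) (hr6 : ∀ x, ρ 1 3 x = ρ 1 4 x)
    (hr7 : ∀ x, ρ 0 2 x = ρ 0 3 x) (hr8 : ∀ x, ρ 0 3 x = ρ 0 4 x)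
    -- down-type and up-type color charges
    (d1L d2L d3L d1R d2R d3R u1L u2L u3L u1R u2R u3R : (Fin 8 → ℝ) → ℝ)
    (hd1L : ∀ x, d1L x = (ρ 2 2 x + ρ 3 3 x) / Real.sqrt 2)
    (hd2L : ∀ x, d2L x = (ρ 3 3 x + ρ 4 4 x) / Real.sqrt 2)
    (hd3L : ∀ x, d3L x = (ρ 4 4 x + ρ 2 2 x) / Real.sqrt 2)
    (hd1R : ∀ x, d1R x = (ρ 2 2 x - ρ 3 3 x) / Real.sqrt 2)
    (hd2R : ∀ x, d2R x = (ρ 3 3 x - ρ 4 4 x) / Real.sqrt 2)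
    (hd3R : ∀ x, d3R x = (ρ 4 4 x - ρ 2 2 x) / Real.sqrt 2)
    (hu1L : ∀ x, u1L x = (ρ 2 3 x + ρ 3 2 x) / Real.sqrt 2)
    (hu2L : ∀ x, u2L x = (ρ 3 4 x + ρ 4 3 x) / Real.sqrt 2)
    (hu3L : ∀ x, u3L x = (ρ 4 2 x + ρ 2 4 x) / Real.sqrt 2)
    (hu1R : ∀ x, u1R x = (ρ 2 3 x - ρ 3 2 x) / Real.sqrt 2)
    (hu2R : ∀ x, u2R x = (ρ 3 4 x - ρ 4 3 x) / Real.sqrt 2)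
    (hu3R : ∀ x, u3R x = (ρ 4 2 x - ρ 2 4 x) / Real.sqrt 2)
    -- gauge potentials
    (U1 V1 U2 V2 U3 V3 X23 Y23 X31 Y31 X12 Y12 W1 : Fin 8 → (Fin 8 → ℝ) → ℝ)
    (hU1 : ∀ P x, U1 P x = (Γ 2 2 P x + Γ 3 3 P x) / Real.sqrt 2)
    (hV1 : ∀ P x, V1 P x = (Γ 2 2 P x - Γ 3 3 P x) / Real.sqrt 2)
    (hU2 : ∀ P x, U2 P x = (Γ 3 3 P x + Γ 4 4 P x) / Real.sqrt 2)
    (hV2 : ∀ P x, V2 P x = (Γ 3 3 P x - Γ 4 4 P x) / Real.sqrt 2)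
    (hU3 : ∀ P x, U3 P x = (Γ 4 4 P x + Γ 2 2 P x) / Real.sqrt 2)
    (hV3 : ∀ P x, V3 P x = (Γ 4 4 P x - Γ 2 2 P x) / Real.sqrt 2)
    (hX23 : ∀ P x, X23 P x = (Γ 2 3 P x + Γ 3 2 P x) / Real.sqrt 2)
    (hY23 : ∀ P x, Y23 P x = (Γ 2 3 P x - Γ 3 2 P x) / Real.sqrt 2)
    (hX31 : ∀ P x, X31 P x = (Γ 3 4 P x + Γ 4 3 P x) / Real.sqrt 2)
    (hY31 : ∀ P x, Y31 P x = (Γ 3 4 P x - Γ 4 3 P x) / Real.sqrt 2)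
    (hX12 : ∀ P x, X12 P x = (Γ 4 2 P x + Γ 2 4 P x) / Real.sqrt 2)
    (hY12 : ∀ P x, Y12 P x = (Γ 4 2 P x - Γ 2 4 P x) / Real.sqrt 2)
    (hW1 : ∀ P x, W1 P x = (Γ 0 1 P x + Γ 1 0 P x) / Real.sqrt 2)
    -- mixing fields
    (d'1L d'2L d'3L u'1L u'2L u'3L : (Fin 8 → ℝ) → ℝ)
    (hd'1L : ∀ x, d'1L x = (1 / (2 * Real.sqrt 2)) *
      (cd75 * (ρ 0 2 x + ρ 2 0 x) + cd65 * (ρ 0 3 x + ρ 3 0 x)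
        + cd74 * (ρ 1 2 x + ρ 2 1 x) + cd64 * (ρ 1 3 x + ρ 3 1 x)))
    (hd'2L : ∀ x, d'2L x = (1 / (2 * Real.sqrt 2)) *
      (cd85 * (ρ 0 3 x + ρ 3 0 x) + cd75 * (ρ 0 4 x + ρ 4 0 x)
        + cd84 * (ρ 1 3 x + ρ 3 1 x) + cd74 * (ρ 1 4 x + ρ 4 1 x)))
    (hd'3L : ∀ x, d'3L x = (1 / (2 * Real.sqrt 2)) *
      (cd65 * (ρ 0 4 x + ρ 4 0 x) + cd85 * (ρ 0 2 x + ρ 2 0 x)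
        + cd64 * (ρ 1 4 x + ρ 4 1 x) + cd84 * (ρ 1 2 x + ρ 2 1 x)))
    (hu'1L : ∀ x, u'1L x = (1 / (2 * Real.sqrt 2)) *
      (cd65 * (ρ 0 2 x + ρ 2 0 x) + cd64 * (ρ 1 2 x + ρ 2 1 x)
        + cd75 * (ρ 0 3 x + ρ 3 0 x) + cd74 * (ρ 1 3 x + ρ 3 1 x)))
    (hu'2L : ∀ x, u'2L x = (1 / (2 * Real.sqrt 2)) *
      (cd75 * (ρ 0 3 x + ρ 3 0 x) + cd74 * (ρ 1 3 x + ρ 3 1 x)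
        + cd85 * (ρ 0 4 x + ρ 4 0 x) + cd84 * (ρ 1 4 x + ρ 4 1 x)))
    (hu'3L : ∀ x, u'3L x = (1 / (2 * Real.sqrt 2)) *
      (cd85 * (ρ 0 4 x + ρ 4 0 x) + cd84 * (ρ 1 4 x + ρ 4 1 x)
        + cd65 * (ρ 0 2 x + ρ 2 0 x) + cd64 * (ρ 1 2 x + ρ 2 1 x))) :
    ∀ x ∈ U, ∀ P : Fin 8,
      ((covD Ginv Γ ρ 2 2 P x + covD Ginv Γ ρ 3 3 P x) / Real.sqrt 2
          = pd P d1L x - gs * d1L x * U1 P x + gs * d2L x * V1 P x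
            - gs * d3L x * V1 P x - gs * u1L x * X23 P x
            - (gs / 2) * u2L x * X31 P x + (gs / 2) * u2L x * Y31 P x
            - (gs / 2) * u3L x * X12 P x - (gs / 2) * u3L x * Y12 P x
            - g * u'1L x * W1 P x) ∧
      ((covD Ginv Γ ρ 3 3 P x + covD Ginv Γ ρ 4 4 P x) / Real.sqrt 2
          = pd P d2L x - gs * d2L x * U2 P x + gs * d3L x * V2 P x
            - gs * d1L x * V2 P x - gs * u2L x * X31 P x
            - (gs / 2) * u3L x * X12 P x + (gs / 2) * u3L x * Y12 P x
            - (gs / 2) * u1L x * X23 P x - (gs / 2) * u1L x * Y23 P x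
            - g * u'2L x * W1 P x) ∧
      ((covD Ginv Γ ρ 4 4 P x + covD Ginv Γ ρ 2 2 P x) / Real.sqrt 2
          = pd P d3L x - gs * d3L x * U3 P x + gs * d1L x * V3 P x
            - gs * d2L x * V3 P x - gs * u3L x * X12 P x
            - (gs / 2) * u1L x * X23 P x + (gs / 2) * u1L x * Y23 P x
            - (gs / 2) * u2L x * X31 P x - (gs / 2) * u2L x * Y31 P x
            - g * u'3L x * W1 P x) ∧
      ((covD Ginv Γ ρ 2 2 P x - covD Ginv Γ ρ 3 3 P x) / Real.sqrt 2
          = pd P d1R x - gs * d1L x * V1 P x + gs * d2L x * U1 P x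
            - gs * d3L x * U1 P x + gs * u1L x * Y23 P x
            + (gs / 2) * u2L x * X31 P x - (gs / 2) * u2L x * Y31 P x
            - (gs / 2) * u3L x * X12 P x - (gs / 2) * u3L x * Y12 P x) ∧
      ((covD Ginv Γ ρ 3 3 P x - covD Ginv Γ ρ 4 4 P x) / Real.sqrt 2
          = pd P d2R x - gs * d2L x * V2 P x + gs * d3L x * U2 P x
            - gs * d1L x * U2 P x + gs * u2L x * Y31 P x
            + (gs / 2) * u3L x * X12 P x - (gs / 2) * u3L x * Y12 P x
            - (gs / 2) * u1L x * X23 P x - (gs / 2) * u1L x * Y23 P x) ∧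
      ((covD Ginv Γ ρ 4 4 P x - covD Ginv Γ ρ 2 2 P x) / Real.sqrt 2
          = pd P d3R x - gs * d3L x * V3 P x + gs * d1L x * U3 P x
            - gs * d2L x * U3 P x + gs * u3L x * Y12 P x
            + (gs / 2) * u1L x * X23 P x - (gs / 2) * u1L x * Y23 P x
            - (gs / 2) * u2L x * X31 P x - (gs / 2) * u2L x * Y31 P x) ∧
      ((covD Ginv Γ ρ 2 3 P x + covD Ginv Γ ρ 3 2 P x) / Real.sqrt 2
          = pd P u1L x - gs * u1L x * U1 P x
            - (gs / 2) * u2L x * X12 P x - (gs / 2) * u2L x * Y12 P x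
            - (gs / 2) * u3L x * X31 P x + (gs / 2) * u3L x * Y31 P x
            - gs * d1L x * X23 P x + gs * d2L x * Y23 P x - gs * d3L x * Y23 P x
            - g * d'1L x * W1 P x) ∧
      ((covD Ginv Γ ρ 3 4 P x + covD Ginv Γ ρ 4 3 P x) / Real.sqrt 2
          = pd P u2L x - gs * u2L x * U2 P x
            - (gs / 2) * u3L x * X23 P x - (gs / 2) * u3L x * Y23 P x
            - (gs / 2) * u1L x * X12 P x + (gs / 2) * u1L x * Y12 P x
            - gs * d2L x * X31 P x + gs * d3L x * Y31 P x - gs * d1L x * Y31 P x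
            - g * d'2L x * W1 P x) ∧
      ((covD Ginv Γ ρ 4 2 P x + covD Ginv Γ ρ 2 4 P x) / Real.sqrt 2
          = pd P u3L x - gs * u3L x * U3 P x
            - (gs / 2) * u1L x * X31 P x - (gs / 2) * u1L x * Y31 P x
            - (gs / 2) * u2L x * X23 P x + (gs / 2) * u2L x * Y23 P x
            - gs * d3L x * X12 P x + gs * d1L x * Y12 P x - gs * d2L x * Y12 P x
            - g * d'3L x * W1 P x) ∧
      ((covD Ginv Γ ρ 2 3 P x - covD Ginv Γ ρ 3 2 P x) / Real.sqrt 2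
          = pd P u1R x - gs * u1R x * U1 P x
            + (gs / 2) * u2R x * X12 P x + (gs / 2) * u2R x * Y12 P x
            + (gs / 2) * u3R x * X31 P x - (gs / 2) * u3R x * Y31 P x) ∧
      ((covD Ginv Γ ρ 3 4 P x - covD Ginv Γ ρ 4 3 P x) / Real.sqrt 2
          = pd P u2R x - gs * u2R x * U2 P x
            + (gs / 2) * u3R x * X23 P x + (gs / 2) * u3R x * Y23 P x
            + (gs / 2) * u1R x * X12 P x - (gs / 2) * u1R x * Y12 P x) ∧
      ((covD Ginv Γ ρ 4 2 P x - covD Ginv Γ ρ 2 4 P x) / Real.sqrt 2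
          = pd P u3R x - gs * u3R x * U3 P x
            + (gs / 2) * u1R x * X31 P x + (gs / 2) * u1R x * Y31 P x
            + (gs / 2) * u2R x * X23 P x - (gs / 2) * u2R x * Y23 P x) := by
  subst hG45 hG67 hG78 hGinv
  intro x hx P
  have hg_lepton : g = √2 * G4 := hg.trans (sqrt_sq_add_sq_self hG4pos.le)
  have hgs_quark : gs = √2 * G6 := hgs.trans (sqrt_sq_add_sq_self hG6pos.le)
  have cyclic_identities := stmt_6_general (Ginv := ![G4, G4, G6, G6, G6])
    (c := !![cd65, cd75, cd85; cd64, cd74, cd84])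
    (hρ := fun i j => hρ (quarkIndex i) (quarkIndex j) x hx)
    (hg := Fin.forall_fin_two.2 ⟨hg_lepton, hg_lepton⟩)
    (hgs := forall_fin_three.2 ⟨hgs_quark, hgs_quark, hgs_quark⟩)
    (hΓsymm := ha1 P x hx)
    (hΓ := Fin.forall_fin_two.2 ⟨forall_fin_three.2 ⟨hb4 P x hx, hb5 P x hx, hb6 P x hx⟩,
      forall_fin_three.2 ⟨hb1 P x hx, hb2 P x hx, hb3 P x hx⟩⟩)
    (hc := Fin.forall_fin_two.2 ⟨forall_eq_apply_zero hc3 hc4, forall_eq_apply_zero hc1 hc2⟩)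
    (hρ_left := Fin.forall_fin_two.2
      ⟨forall_eq_apply_zero (hr7 x) (hr8 x), forall_eq_apply_zero (hr5 x) (hr6 x)⟩)
    (hρ_right := Fin.forall_fin_two.2
      ⟨forall_eq_apply_zero (hr3 x) (hr4 x), forall_eq_apply_zero (hr1 x) (hr2 x)⟩)
  simp only [funext hd1L, funext hd2L, funext hd3L, funext hd1R, funext hd2R, funext hd3R,
    funext hu1L, funext hu2L, funext hu3L, funext hu1R, funext hu2R, funext hu3R,
    hU1, hU2, hU3, hV1, hV2, hV3, hX23, hX31, hX12, hY23, hY31, hY12, hW1,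
    hd'1L, hd'2L, hd'3L, hu'1L, hu'2L, hu'3L]
  obtain ⟨⟨hd₁L, hd₁R, hu₁L, hu₁R⟩, ⟨hd₂L, hd₂R, hu₂L, hu₂R⟩, ⟨hd₃L, hd₃R, hu₃L, hu₃R⟩⟩ :=
    forall_fin_three.1 cyclic_identities
  exact ⟨hd₁L, hd₂L, hd₃L, hd₁R, hd₂R, hd₃R, hu₁L, hu₂L, hu₃L, hu₁R, hu₂R, hu₃R⟩

end
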